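/- Let ε ∈ {−1, 1}, μ > 0, and ψ(x) = ε·μ²|x|²/2 on ℝ². Let γ: ℝ × [0,T) → ℝ² be a smooth family of closed plane curves, define τ(t̂) = (1/(2εμ²))·ln(1 + 2εμ²·t̂) and T̂ = (e^{2εμ²T} − 1)/(2εμ²), and set γ̂(u,t̂) = e^{εμ²·τ(t̂)}·γ(u, τ(t̂)) for t̂ ∈ [0, T̂). Then γ satisfies the normal ψMCF equation ⟨∂_t γ, N⟩ = k_ψ on ℝ × [0,T) if and only if γ̂ satisfies the normal curve shortening flow equation ⟨∂_{t̂} γ̂, N̂⟩ = k̂ on ℝ × [0,T̂), where N̂ and k̂ are the unit normal and curvature of γ̂(·,t̂). (When ε = −1 one has t̂ < 1/(2μ²).) -/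

import Mathlib

noncomputable section
open Real Set

def dot2 (v w : ℝ × ℝ) : ℝ := v.1 * w.1 + v.2 * w.2

def nrm2 (v : ℝ × ℝ) : ℝ := Real.sqrt (v.1 ^ 2 + v.2 ^ 2)

def Jrot (v : ℝ × ℝ) : ℝ × ℝ := (-v.2, v.1)

structure IsClosedCurve (γ : ℝ → ℝ × ℝ) : Prop where
  smooth : ContDiff ℝ (⊤ : ℕ∞) γ
  periodic : Function.Periodic γ (2 * π)
  regular : ∀ u, deriv γ u ≠ 0

def tangentC (γ : ℝ → ℝ × ℝ) (u : ℝ) : ℝ × ℝ := (nrm2 (deriv γ u))⁻¹ • deriv γ u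

def normalC (γ : ℝ → ℝ × ℝ) (u : ℝ) : ℝ × ℝ := Jrot (tangentC γ u)

def arcDeriv {F : Type*} [NormedAddCommGroup F] [NormedSpace ℝ F]
    (γ : ℝ → ℝ × ℝ) (h : ℝ → F) (u : ℝ) : F :=
  (nrm2 (deriv γ u))⁻¹ • deriv h u

def curvature (γ : ℝ → ℝ × ℝ) (u : ℝ) : ℝ :=
  dot2 (arcDeriv γ (tangentC γ) u) (normalC γ u)

def psiCurv (ψ : ℝ × ℝ → ℝ) (γ : ℝ → ℝ × ℝ) (u : ℝ) : ℝ :=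
  curvature γ u - fderiv ℝ ψ (γ u) (normalC γ u)

def IsPsiMinimal (ψ : ℝ × ℝ → ℝ) (γ : ℝ → ℝ × ℝ) : Prop :=
  ∀ u, psiCurv ψ γ u = 0

def signedArea (γ : ℝ → ℝ × ℝ) : ℝ :=
  (1/2) * ∫ u in (0:ℝ)..(2*π), ((γ u).1 * (deriv γ u).2 - (γ u).2 * (deriv γ u).1)

def turningNumber (γ : ℝ → ℝ × ℝ) : ℝ :=
  (1/(2*π)) * ∫ u in (0:ℝ)..(2*π), curvature γ u * nrm2 (deriv γ u)

def windingNumber (γ : ℝ → ℝ × ℝ) : ℝ :=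
  (1/(2*π)) * ∫ u in (0:ℝ)..(2*π),
    ((γ u).1 * (deriv γ u).2 - (γ u).2 * (deriv γ u).1) / (nrm2 (γ u))^2

def hess2 (ψ : ℝ × ℝ → ℝ) (x v : ℝ × ℝ) : ℝ :=
  fderiv ℝ (fun y => fderiv ℝ ψ y v) x v

def SmoothFamily (γ : ℝ → ℝ → ℝ × ℝ) : Prop :=
  ContDiff ℝ (⊤ : ℕ∞) fun p : ℝ × ℝ => γ p.1 p.2

/-!
The homothety `x ↦ a • x` fixes the unit normal and divides the curvature by `a`. For
`γ̂ s = a s • γ (τ s)` the normal velocity is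
`a τ' ⟨∂ₜγ, N⟩ + a' ⟨γ, N⟩`, so if `τ' = a⁻²` and `a' = c a⁻¹` then
`⟨∂ₛγ̂, N̂⟩ = k̂` is `a⁻¹` times `⟨∂ₜγ, N⟩ + c ⟨γ, N⟩ = k`, the ψMCF equation for
`ψ x = c |x|² / 2`. With `τ 0 = 0` and `a 0 = 1` these two ordinary differential equations
force `a² = 1 + 2 c s` and `τ = log (1 + 2 c s) / (2 c)`.
-/

lemma dot2_add_left (v w z : ℝ × ℝ) : dot2 (v + w) z = dot2 v z + dot2 w z := by
  simp only [dot2, Prod.fst_add, Prod.snd_add]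
  ring

lemma dot2_smul_left (r : ℝ) (v w : ℝ × ℝ) : dot2 (r • v) w = r * dot2 v w := by
  simp only [dot2, Prod.smul_fst, Prod.smul_snd, smul_eq_mul]
  ring

lemma nrm2_sq (v : ℝ × ℝ) : nrm2 v ^ 2 = v.1 ^ 2 + v.2 ^ 2 :=
  Real.sq_sqrt (by positivity)

lemma nrm2_smul (r : ℝ) (v : ℝ × ℝ) : nrm2 (r • v) = |r| * nrm2 v := by
  have hsq : (r • v).1 ^ 2 + (r • v).2 ^ 2 = r ^ 2 * (v.1 ^ 2 + v.2 ^ 2) := by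
    simp only [Prod.smul_fst, Prod.smul_snd, smul_eq_mul]
    ring
  rw [nrm2, nrm2, hsq, Real.sqrt_mul (sq_nonneg r), Real.sqrt_sq_eq_abs]

section Homothety

variable {a : ℝ}

lemma arcDeriv_smul_curve {F : Type*} [NormedAddCommGroup F] [NormedSpace ℝ F]
    (ha : 0 < a) (γ : ℝ → ℝ × ℝ) (h : ℝ → F) (u : ℝ) :
    arcDeriv (a • γ) h u = a⁻¹ • arcDeriv γ h u := by
  rw [arcDeriv, arcDeriv, deriv_const_smul_field, nrm2_smul, abs_of_pos ha, mul_inv, smul_smul]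

lemma tangentC_smul (ha : 0 < a) (γ : ℝ → ℝ × ℝ) : tangentC (a • γ) = tangentC γ := by
  funext u
  calc tangentC (a • γ) u = a⁻¹ • arcDeriv γ (a • γ) u := arcDeriv_smul_curve ha γ (a • γ) u
    _ = tangentC γ u := by
      rw [arcDeriv, deriv_const_smul_field, smul_comm _ a, inv_smul_smul₀ ha.ne', tangentC]

lemma normalC_smul (ha : 0 < a) (γ : ℝ → ℝ × ℝ) : normalC (a • γ) = normalC γ := by
  funext u
  rw [normalC, normalC, tangentC_smul ha]

lemma curvature_smul (ha : 0 < a) (γ : ℝ → ℝ × ℝ) (u : ℝ) :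
    curvature (a • γ) u = a⁻¹ * curvature γ u := by
  rw [curvature, tangentC_smul ha, normalC_smul ha, arcDeriv_smul_curve ha, dot2_smul_left,
    curvature]

end Homothety

lemma hasFDerivAt_nrm2_sq (x : ℝ × ℝ) :
    HasFDerivAt (fun y => nrm2 y ^ 2)
      ((2 * x.1) • ContinuousLinearMap.fst ℝ ℝ ℝ + (2 * x.2) • ContinuousLinearMap.snd ℝ ℝ ℝ)
      x := by
  simp only [nrm2_sq]
  have hfst : HasFDerivAt Prod.fst (ContinuousLinearMap.fst ℝ ℝ ℝ) x := hasFDerivAt_fst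
  have hsnd : HasFDerivAt Prod.snd (ContinuousLinearMap.snd ℝ ℝ ℝ) x := hasFDerivAt_snd
  simpa using (hfst.pow 2).fun_add (hsnd.pow 2)

lemma psiCurv_gaussian (c : ℝ) (γ : ℝ → ℝ × ℝ) (u : ℝ) :
    psiCurv (fun x => c * nrm2 x ^ 2 / 2) γ u =
      curvature γ u - c * dot2 (γ u) (normalC γ u) := by
  have hψ := ((hasFDerivAt_nrm2_sq (γ u)).const_mul c).mul_const (2⁻¹ : ℝ)
  simp only [psiCurv, div_eq_mul_inv]
  rw [hψ.fderiv]
  simp only [dot2, smul_apply, add_apply,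
    ContinuousLinearMap.coe_fst', ContinuousLinearMap.coe_snd', smul_eq_mul]
  ring

section Flow

/-- The normal speed `⟨∂ₜ γ, N⟩` at time `t` of a family of curves `γ t`. -/
def normalVelocity (γ : ℝ → ℝ → ℝ × ℝ) (t u : ℝ) : ℝ :=
  dot2 (deriv (fun σ => γ σ u) t) (normalC (γ t) u)

/-- The normal ψMCF equation `⟨∂ₜ γ, N⟩ = k_ψ` at the times in `S`. -/
def IsPsiMCFOn (ψ : ℝ × ℝ → ℝ) (γ : ℝ → ℝ → ℝ × ℝ) (S : Set ℝ) : Prop :=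
  ∀ t ∈ S, ∀ u, normalVelocity γ t u = psiCurv ψ (γ t) u

/-- The normal curve shortening flow equation `⟨∂ₜ γ, N⟩ = k` at the times in `S`. -/
def IsCurveShorteningOn (γ : ℝ → ℝ → ℝ × ℝ) (S : Set ℝ) : Prop :=
  ∀ t ∈ S, ∀ u, normalVelocity γ t u = curvature (γ t) u

/-- A family of immersed, not necessarily closed, `C²` curves that is differentiable in time at
each time in `S`: the regularity that gives both sides of the flow equations their meaning. -/
structure IsImmersedFamilyOn (γ : ℝ → ℝ → ℝ × ℝ) (S : Set ℝ) : Prop where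
  differentiableAt_time : ∀ t ∈ S, ∀ u, DifferentiableAt ℝ (fun σ => γ σ u) t
  contDiff_curve : ∀ t ∈ S, ContDiff ℝ 2 (γ t)
  regular : ∀ t ∈ S, ∀ u, deriv (γ t) u ≠ 0

lemma SmoothFamily.isImmersedFamilyOn {γ : ℝ → ℝ → ℝ × ℝ} {S : Set ℝ} (hγ : SmoothFamily γ)
    (hreg : ∀ t ∈ S, ∀ u, deriv (γ t) u ≠ 0) : IsImmersedFamilyOn γ S where
  differentiableAt_time t _ u :=
    ContDiff.differentiable (hγ.comp (contDiff_id.prodMk contDiff_const)) (by simp) t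
  contDiff_curve t _ :=
    contDiff_infty.1 (hγ.comp (contDiff_const.prodMk contDiff_id)) 2
  regular := hreg

variable {γ : ℝ → ℝ → ℝ × ℝ} {a τ : ℝ → ℝ} {s u : ℝ}

lemma normalVelocity_smul_comp {a' τ' : ℝ} (ha : HasDerivAt a a' s) (ha_pos : 0 < a s)
    (hτ : HasDerivAt τ τ' s) (hγ : DifferentiableAt ℝ (fun t => γ t u) (τ s)) :
    normalVelocity (fun σ => a σ • γ (τ σ)) s u =
      a s * τ' * normalVelocity γ (τ s) u + a' * dot2 (γ (τ s) u) (normalC (γ (τ s)) u) := by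
  have hderiv : HasDerivAt (fun σ => a σ • γ (τ σ) u)
      (a s • τ' • deriv (fun t => γ t u) (τ s) + a' • γ (τ s) u) s :=
    ha.fun_smul (hγ.hasDerivAt.scomp s hτ)
  simp only [normalVelocity, Pi.smul_apply]
  rw [hderiv.deriv, normalC_smul ha_pos, dot2_add_left, dot2_smul_left, dot2_smul_left,
    dot2_smul_left, mul_assoc]

lemma curveShortening_smul_comp_iff {c : ℝ} (ha : HasDerivAt a (c * (a s)⁻¹) s)
    (ha_pos : 0 < a s) (hτ : HasDerivAt τ (a s ^ 2)⁻¹ s)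
    (hγ : DifferentiableAt ℝ (fun t => γ t u) (τ s)) :
    normalVelocity (fun σ => a σ • γ (τ σ)) s u = curvature (a s • γ (τ s)) u ↔
      normalVelocity γ (τ s) u = psiCurv (fun x => c * nrm2 x ^ 2 / 2) (γ (τ s)) u := by
  have hvelocity : normalVelocity (fun σ => a σ • γ (τ σ)) s u =
      (a s)⁻¹ * (normalVelocity γ (τ s) u + c * dot2 (γ (τ s) u) (normalC (γ (τ s)) u)) := by
    rw [normalVelocity_smul_comp ha ha_pos hτ hγ]
    field_simp
  rw [hvelocity, curvature_smul ha_pos, mul_right_inj' (inv_ne_zero ha_pos.ne'),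
    psiCurv_gaussian, eq_sub_iff_add_eq]

end Flow

section TimeChange

/-- The time `t̂` of the rescaled flow that corresponds to time `t` of the original flow, for a
flow whose area scales at the exponential rate `k`; in the Gaussian case `k = 2 ε μ²`. -/
def rescaledTime (k t : ℝ) : ℝ := (Real.exp (k * t) - 1) / k

/-- The inverse `τ` of `rescaledTime k`, meaningful where `0 < 1 + k * s`. -/
def originalTime (k s : ℝ) : ℝ := Real.log (1 + k * s) / k

variable {k : ℝ}

lemma one_add_mul_rescaledTime (hk : k ≠ 0) (t : ℝ) :
    1 + k * rescaledTime k t = Real.exp (k * t) := by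
  rw [rescaledTime, mul_div_cancel₀ _ hk, add_sub_cancel]

lemma originalTime_rescaledTime (hk : k ≠ 0) (t : ℝ) :
    originalTime k (rescaledTime k t) = t := by
  rw [originalTime, one_add_mul_rescaledTime hk, Real.log_exp, mul_div_cancel_left₀ t hk]

lemma hasDerivAt_originalTime (hk : k ≠ 0) {s : ℝ} (hs : 1 + k * s ≠ 0) :
    HasDerivAt (originalTime k) (1 + k * s)⁻¹ s := by
  have hlin : HasDerivAt (fun x => 1 + k * x) k s := by
    simpa using ((hasDerivAt_id s).const_mul k).const_add 1
  exact ((hlin.log hs).div_const k).congr_deriv (by field_simp)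

lemma hasDerivAt_rescaledTime (hk : k ≠ 0) (t : ℝ) :
    HasDerivAt (rescaledTime k) (Real.exp (k * t)) t := by
  have hlin : HasDerivAt (fun x => k * x) k t := by
    simpa using (hasDerivAt_id t).const_mul k
  exact ((hlin.exp.sub_const 1).div_const k).congr_deriv (mul_div_cancel_right₀ _ hk)

lemma strictMono_rescaledTime (hk : k ≠ 0) : StrictMono (rescaledTime k) :=
  strictMono_of_deriv_pos fun t => by
    rw [(hasDerivAt_rescaledTime hk t).deriv]
    exact Real.exp_pos _

lemma rescaledTime_image_Ico (hk : k ≠ 0) {T : ℝ} (hT : 0 ≤ T) :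
    rescaledTime k '' Ico 0 T = Ico 0 (rescaledTime k T) := by
  have hzero : rescaledTime k 0 = 0 := by simp [rescaledTime]
  have hcont : Continuous (rescaledTime k) :=
    continuous_iff_continuousAt.2 fun t => (hasDerivAt_rescaledTime hk t).continuousAt
  have himage : rescaledTime k '' Ico 0 T = Ico (rescaledTime k 0) (rescaledTime k T) :=
    (strictMono_rescaledTime hk).mapsTo_Ico.image_subset.antisymm
      (intermediate_value_Ico hT hcont.continuousOn)
  rwa [hzero] at himage

end TimeChange

/-- The rescaled family `γ̂ s = e^{cτ(s)} γ (τ s)` with `τ = originalTime (2 * c)`. -/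
def rescaledFamily (c : ℝ) (γ : ℝ → ℝ → ℝ × ℝ) (s : ℝ) : ℝ → ℝ × ℝ :=
  Real.exp (c * originalTime (2 * c) s) • γ (originalTime (2 * c) s)

lemma curveShortening_rescaledFamily_iff {c t u : ℝ} (hc : c ≠ 0) {γ : ℝ → ℝ → ℝ × ℝ}
    (hγ : DifferentiableAt ℝ (fun σ => γ σ u) t) :
    normalVelocity (rescaledFamily c γ) (rescaledTime (2 * c) t) u =
        curvature (rescaledFamily c γ (rescaledTime (2 * c) t)) u ↔
      normalVelocity γ t u = psiCurv (fun x => c * nrm2 x ^ 2 / 2) (γ t) u := by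
  have hk : 2 * c ≠ 0 := mul_ne_zero two_ne_zero hc
  set s := rescaledTime (2 * c) t
  have hτs : originalTime (2 * c) s = t := originalTime_rescaledTime hk t
  have hscale : 1 + 2 * c * s = Real.exp (c * t) ^ 2 := by
    rw [one_add_mul_rescaledTime hk, ← Real.exp_nat_mul, Nat.cast_two, mul_assoc]
  have hτ : HasDerivAt (originalTime (2 * c)) (Real.exp (c * t) ^ 2)⁻¹ s :=
    hscale ▸ hasDerivAt_originalTime hk (hscale ▸ (pow_pos (Real.exp_pos _) 2).ne')
  have ha : HasDerivAt (fun σ => Real.exp (c * originalTime (2 * c) σ))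
      (c * (Real.exp (c * t))⁻¹) s := by
    refine (hτ.const_mul c).exp.congr_deriv ?_
    rw [hτs]
    field_simp
  rw [← hτs] at ha hτ hγ ⊢
  exact curveShortening_smul_comp_iff ha (Real.exp_pos _) hτ hγ

theorem gaussian_psiMCF_equiv_MCF_general {c : ℝ} (hc : c ≠ 0) {γ : ℝ → ℝ → ℝ × ℝ} {S : Set ℝ}
    (hγ : IsImmersedFamilyOn γ S) :
    IsPsiMCFOn (fun x => c * nrm2 x ^ 2 / 2) γ S ↔
      IsCurveShorteningOn (rescaledFamily c γ) (rescaledTime (2 * c) '' S) := by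
  rw [IsPsiMCFOn, IsCurveShorteningOn, forall_mem_image]
  exact forall₂_congr fun t ht => forall_congr' fun u =>
    (curveShortening_rescaledFamily_iff hc (hγ.differentiableAt_time t ht u)).symm

/-- equivalence between ψMCF for the (anti-)Gaussian density
ψ(x) = ε μ²|x|²/2 and the curve shortening flow of the rescaled family
γ̂(u,t̂) = e^{εμ²τ(t̂)} γ(u, τ(t̂)), where τ(t̂) = (1/(2εμ²)) ln(1 + 2εμ² t̂). -/
theorem gaussian_psiMCF_equiv_MCF
    (ε μ T : ℝ) (hε : ε = 1 ∨ ε = -1) (hμ : 0 < μ) (hT : 0 < T)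
    (γ : ℝ → ℝ → ℝ × ℝ)
    (hfam : SmoothFamily γ)
    (hclosed : ∀ t ∈ Set.Ico (0:ℝ) T, IsClosedCurve (γ t))
    (τ : ℝ → ℝ)
    (hτ : ∀ th : ℝ, τ th = (1 / (2 * ε * μ ^ 2)) * Real.log (1 + 2 * ε * μ ^ 2 * th))
    (Th : ℝ) (hTh : Th = (Real.exp (2 * ε * μ ^ 2 * T) - 1) / (2 * ε * μ ^ 2))
    (γhat : ℝ → ℝ → ℝ × ℝ)
    (hγhat : ∀ th u : ℝ, γhat th u = Real.exp (ε * μ ^ 2 * τ th) • γ (τ th) u) :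
    (∀ t ∈ Set.Ico (0:ℝ) T, ∀ u : ℝ,
      dot2 (deriv (fun τ' => γ τ' u) t) (normalC (γ t) u)
        = psiCurv (fun x => ε * μ ^ 2 * (nrm2 x) ^ 2 / 2) (γ t) u)
    ↔ (∀ th ∈ Set.Ico (0:ℝ) Th, ∀ u : ℝ,
        dot2 (deriv (fun σ => γhat σ u) th) (normalC (γhat th) u)
          = curvature (γhat th) u) := by
  have hc : ε * μ ^ 2 ≠ 0 :=
    mul_ne_zero (by rcases hε with rfl | rfl <;> norm_num) (pow_pos hμ 2).ne'
  obtain rfl : γhat = rescaledFamily (ε * μ ^ 2) γ := funext₂ fun s u => by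
    rw [hγhat, hτ, one_div_mul_eq_div, mul_assoc 2 ε, rescaledFamily, originalTime, Pi.smul_apply]
  have hTh' : Th = rescaledTime (2 * (ε * μ ^ 2)) T := by rw [hTh, mul_assoc 2 ε, rescaledTime]
  rw [hTh', ← rescaledTime_image_Ico (mul_ne_zero two_ne_zero hc) hT.le]
  exact gaussian_psiMCF_equiv_MCF_general hc
    (hfam.isImmersedFamilyOn fun t ht => (hclosed t ht).regular)
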